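/- arXiv:2502.02297 — 2 statements merged into one kernel-verified Lean document; each statement's English description precedes it below -/
import Mathlib

section
/- Let g \ge 1 be an integer and let p, q be complex numbers with 0 < |q| < |p| < 1. Then the family a \mapsto a^{2g-1} p^a / (1 - q^a), indexed by nonzero integers a, is absolutely summable, and \sum_{a \in \mathbb{Z}, a \ne 0} a^{2g-1} p^a / (1 - q^a) = \sum_{a \ge 1} a^{2g-1} p^a + \sum_{n \ge 1} q^n \sum_{d | n} d^{2g-1} (p^d + p^{-d}), where both series on the right converge absolutely. -/
/-!
The identity is a Lambert series expansion. Expanding `q ^ d / (1 - q ^ d) = ∑_{m ≥ 1} q ^ (d * m)`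
and collecting the terms with `d * m = n` gives
`∑_d u d * q ^ d / (1 - q ^ d) = ∑_n q ^ n * ∑_{d ∣ n} u d`.
For a bilateral sequence `v : ℤ → 𝕜`, the terms at `d` and `-d` of `∑ v a / (1 - q ^ a)` add up to
`v d + (v d - v (-d)) * q ^ d / (1 - q ^ d)`, so this applies to `u d = v d - v (-d)`.
When `v a = a ^ k * p ^ a` with `k` odd, `u d = d ^ k * (p ^ d + p ^ (-d))`, and the series in `u`
converges because `‖q * p‖ < 1` and `‖q / p‖ < 1`.
-/

section Reindexing

variable {M : Type*} [AddCommMonoid M] [TopologicalSpace M] [ContinuousAdd M]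

lemma hasSum_sum_divisors [RegularSpace M] {F : ℕ → ℕ → M} {s : M}
    (hF : HasSum (fun c : ℕ+ × ℕ+ => F c.1 c.2) s) :
    HasSum (fun n : ℕ+ => ∑ d ∈ (n : ℕ).divisors, F d (n / d)) s := by
  refine (sigmaAntidiagonalEquivProd.hasSum_iff.2 hF).sigma fun n => ?_
  rw [← Nat.sum_divisorsAntidiagonal]
  exact (n : ℕ).divisorsAntidiagonal.hasSum fun c => F c.1 c.2

lemma hasSum_int_ne_zero {f : ℤ → M} {s t : M} (hpos : HasSum (fun n : ℕ+ => f n) s)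
    (hneg : HasSum (fun n : ℕ+ => f (-n)) t) :
    HasSum (fun a : {a : ℤ // a ≠ 0} => f a) (s + t) := by
  refine hasSum_subtype_iff_indicator (s := {a : ℤ | a ≠ 0}).2 ?_
  have hne (n : ℕ) : (n : ℤ) + 1 ≠ 0 := by omega
  have hne' (n : ℕ) : -1 + -(n : ℤ) ≠ 0 := by omega
  have hpos' := hasSum_pnat_iff_hasSum_succ (f := fun n : ℕ => f n).1 hpos
  have hneg' := hasSum_pnat_iff_hasSum_succ (f := fun n : ℕ => f (-n)).1 hneg
  simpa using HasSum.of_add_one_of_neg_add_one (f := Set.indicator {a : ℤ | a ≠ 0} f)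
    (by simpa [hne] using hpos') (by simpa [hne'] using hneg')

end Reindexing

section Lambert

variable {𝕜 : Type*} [NormedField 𝕜] {q : 𝕜} {u : ℕ → 𝕜}

lemma one_sub_pow_ne_zero_of_norm_lt_one (hq : ‖q‖ < 1) {n : ℕ} (hn : n ≠ 0) :
    1 - q ^ n ≠ 0 := by
  intro h
  have hlt : ‖q ^ n‖ < 1 := by
    simpa only [norm_pow] using pow_lt_one₀ (norm_nonneg q) hq hn
  rw [← sub_eq_zero.1 h, norm_one] at hlt
  exact hlt.false

lemma hasSum_pnat_geometric_of_norm_lt_one (hq : ‖q‖ < 1) :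
    HasSum (fun m : ℕ+ => q ^ (m : ℕ)) (q / (1 - q)) := by
  rw [hasSum_pnat_iff_hasSum_succ (f := fun m => q ^ m)]
  simpa only [pow_succ', div_eq_mul_inv] using (hasSum_geometric_of_norm_lt_one hq).mul_left q

lemma hasSum_mul_pow_mul (hq : ‖q‖ < 1) (x : 𝕜) (d : ℕ+) :
    HasSum (fun m : ℕ+ => x * q ^ (d * m : ℕ)) (x * (q ^ (d : ℕ) / (1 - q ^ (d : ℕ)))) := by
  have hqd : ‖q ^ (d : ℕ)‖ < 1 := by
    simpa only [norm_pow] using pow_lt_one₀ (norm_nonneg q) hq d.ne_zero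
  simpa only [pow_mul] using (hasSum_pnat_geometric_of_norm_lt_one hqd).mul_left x

lemma sum_divisors_mul_pow (n : ℕ) :
    ∑ d ∈ n.divisors, u d * q ^ (d * (n / d)) = q ^ n * ∑ d ∈ n.divisors, u d := by
  rw [Finset.mul_sum]
  refine Finset.sum_congr rfl fun d hd => ?_
  rw [Nat.mul_div_cancel' (Nat.dvd_of_mem_divisors hd), mul_comm]

lemma summable_norm_mul_pow_of_summable_norm (hq : ‖q‖ < 1)
    (hu : Summable fun n : ℕ+ => ‖u n‖) : Summable fun n : ℕ+ => ‖u n * q ^ (n : ℕ)‖ := by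
  refine .of_nonneg_of_le (fun _ => norm_nonneg _) (fun n => ?_) hu
  rw [norm_mul, norm_pow]
  exact mul_le_of_le_one_right (norm_nonneg _) (pow_le_one₀ (norm_nonneg q) hq.le)

lemma summable_norm_mul_pow_mul (hq : ‖q‖ < 1)
    (hu : Summable fun d : ℕ+ => ‖u d * q ^ (d : ℕ)‖) :
    Summable fun c : ℕ+ × ℕ+ => ‖u c.1 * q ^ (c.1 * c.2 : ℕ)‖ := by
  have hgeom : Summable fun m : ℕ+ => ‖q‖ ^ m.natPred :=
    (summable_geometric_of_lt_one (norm_nonneg q) hq).comp_injective PNat.natPred_injective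
  refine .of_nonneg_of_le (fun _ => norm_nonneg _) ?_
    (hu.mul_of_nonneg hgeom (fun _ => norm_nonneg _) fun _ => by positivity)
  rintro ⟨d, m⟩
  calc ‖u d * q ^ (d * m : ℕ)‖
      = ‖u d * q ^ (d : ℕ)‖ * (‖q‖ ^ m.natPred) ^ (d : ℕ) := by
        rw [← m.natPred_add_one, mul_add_one, pow_add]
        simp only [norm_mul, norm_pow, ← pow_mul, mul_comm m.natPred]
        ring
    _ ≤ ‖u d * q ^ (d : ℕ)‖ * ‖q‖ ^ m.natPred := by
        gcongr
        exact pow_le_of_le_one (by positivity) (pow_le_one₀ (norm_nonneg q) hq.le) d.ne_zero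

lemma summable_norm_mul_pow_div_one_sub (hq : ‖q‖ < 1)
    (hu : Summable fun d : ℕ+ => ‖u d * q ^ (d : ℕ)‖) :
    Summable fun d : ℕ+ => ‖u d * (q ^ (d : ℕ) / (1 - q ^ (d : ℕ)))‖ := by
  have hprod := summable_norm_mul_pow_mul hq hu
  refine .of_nonneg_of_le (fun _ => norm_nonneg _) (fun d => ?_) hprod.prod
  rw [← (hasSum_mul_pow_mul hq (u d) d).tsum_eq]
  exact norm_tsum_le_tsum_norm (hprod.prod_factor d)

lemma summable_norm_pow_mul_sum_divisors (hq : ‖q‖ < 1)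
    (hu : Summable fun d : ℕ+ => ‖u d * q ^ (d : ℕ)‖) :
    Summable fun n : ℕ+ => ‖q ^ (n : ℕ) * ∑ d ∈ (n : ℕ).divisors, u d‖ := by
  refine .of_nonneg_of_le (fun _ => norm_nonneg _) (fun n => ?_)
    (hasSum_sum_divisors (F := fun d m => ‖u d * q ^ (d * m)‖)
      (summable_norm_mul_pow_mul hq hu).hasSum).summable
  rw [← sum_divisors_mul_pow]
  exact norm_sum_le _ _

theorem tsum_mul_pow_div_one_sub_eq_tsum_sum_divisors [CompleteSpace 𝕜] (hq : ‖q‖ < 1)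
    (hu : Summable fun d : ℕ+ => ‖u d * q ^ (d : ℕ)‖) :
    ∑' d : ℕ+, u d * (q ^ (d : ℕ) / (1 - q ^ (d : ℕ))) =
      ∑' n : ℕ+, q ^ (n : ℕ) * ∑ d ∈ (n : ℕ).divisors, u d := by
  have hprod := (summable_norm_mul_pow_mul hq hu).of_norm.hasSum
  rw [(hprod.prod_fiberwise fun d => hasSum_mul_pow_mul hq (u d) d).tsum_eq,
    ← (hasSum_sum_divisors (F := fun d m => u d * q ^ (d * m)) hprod).tsum_eq]
  simp only [sum_divisors_mul_pow]

end Lambert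

section Bilateral

variable {𝕜 : Type*} [NormedField 𝕜] {q : 𝕜} {u : ℕ → 𝕜} {v : ℤ → 𝕜}

lemma div_one_sub_zpow_natCast (hq : ‖q‖ < 1) (x : 𝕜) {n : ℕ} (hn : n ≠ 0) :
    x / (1 - q ^ (n : ℤ)) = x + x * (q ^ n / (1 - q ^ n)) := by
  have hne := one_sub_pow_ne_zero_of_norm_lt_one hq hn
  rw [zpow_natCast]
  field_simp
  ring

lemma div_one_sub_zpow_neg_natCast (hq₀ : q ≠ 0) (x : 𝕜) (n : ℕ) :
    x / (1 - q ^ (-n : ℤ)) = -(x * (q ^ n / (1 - q ^ n))) := by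
  have hden : 1 - q ^ (-n : ℤ) = -((1 - q ^ n) / q ^ n) := by
    rw [zpow_neg, zpow_natCast]
    field_simp
    ring
  rw [hden, div_neg, div_div_eq_mul_div, mul_div_assoc]

lemma summable_norm_div_one_sub_zpow_natCast (hq : ‖q‖ < 1)
    (hu : Summable fun n : ℕ+ => ‖u n‖) :
    Summable fun n : ℕ+ => ‖u n / (1 - q ^ (n : ℤ))‖ := by
  have hlambert := summable_norm_mul_pow_div_one_sub hq
    (summable_norm_mul_pow_of_summable_norm hq hu)
  refine .of_nonneg_of_le (fun _ => norm_nonneg _) (fun n => ?_) (hu.add hlambert)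
  rw [div_one_sub_zpow_natCast hq _ n.ne_zero]
  exact norm_add_le _ _

lemma summable_norm_div_one_sub_zpow_neg_natCast (hq₀ : q ≠ 0) (hq : ‖q‖ < 1)
    (hu : Summable fun n : ℕ+ => ‖u n * q ^ (n : ℕ)‖) :
    Summable fun n : ℕ+ => ‖u n / (1 - q ^ (-n : ℤ))‖ := by
  simpa only [div_one_sub_zpow_neg_natCast hq₀, norm_neg] using
    summable_norm_mul_pow_div_one_sub hq hu

lemma summable_norm_sub_neg_mul_pow (hq : ‖q‖ < 1) (hpos : Summable fun n : ℕ+ => ‖v n‖)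
    (hneg : Summable fun n : ℕ+ => ‖v (-n) * q ^ (n : ℕ)‖) :
    Summable fun n : ℕ+ => ‖(v n - v (-n)) * q ^ (n : ℕ)‖ := by
  refine .of_nonneg_of_le (fun _ => norm_nonneg _) (fun n => ?_)
    ((summable_norm_mul_pow_of_summable_norm (u := fun n => v n) hq hpos).add hneg)
  rw [sub_mul]
  exact norm_sub_le _ _

theorem summable_norm_pow_mul_sum_divisors_sub_neg (hq : ‖q‖ < 1)
    (hpos : Summable fun n : ℕ+ => ‖v n‖)
    (hneg : Summable fun n : ℕ+ => ‖v (-n) * q ^ (n : ℕ)‖) :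
    Summable fun n : ℕ+ => ‖q ^ (n : ℕ) * ∑ d ∈ (n : ℕ).divisors, (v d - v (-d))‖ :=
  summable_norm_pow_mul_sum_divisors (u := fun d => v d - v (-d)) hq
    (summable_norm_sub_neg_mul_pow hq hpos hneg)

theorem summable_norm_div_one_sub_zpow (hq₀ : q ≠ 0) (hq : ‖q‖ < 1)
    (hpos : Summable fun n : ℕ+ => ‖v n‖)
    (hneg : Summable fun n : ℕ+ => ‖v (-n) * q ^ (n : ℕ)‖) :
    Summable fun a : {a : ℤ // a ≠ 0} => ‖v a / (1 - q ^ a.1)‖ :=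
  (hasSum_int_ne_zero (f := fun a => ‖v a / (1 - q ^ a)‖)
    (summable_norm_div_one_sub_zpow_natCast (u := fun n => v n) hq hpos).hasSum
    (summable_norm_div_one_sub_zpow_neg_natCast (u := fun n => v (-n)) hq₀ hq hneg).hasSum).summable

theorem tsum_div_one_sub_zpow_eq_tsum_add_tsum_sum_divisors [CompleteSpace 𝕜]
    (hq₀ : q ≠ 0) (hq : ‖q‖ < 1) (hpos : Summable fun n : ℕ+ => ‖v n‖)
    (hneg : Summable fun n : ℕ+ => ‖v (-n) * q ^ (n : ℕ)‖) :
    ∑' a : {a : ℤ // a ≠ 0}, v a / (1 - q ^ a.1) =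
      (∑' n : ℕ+, v n) +
        ∑' n : ℕ+, q ^ (n : ℕ) * ∑ d ∈ (n : ℕ).divisors, (v d - v (-d)) := by
  have hposSum :=
    (summable_norm_div_one_sub_zpow_natCast (u := fun n => v n) hq hpos).of_norm
  have hnegSum :=
    (summable_norm_div_one_sub_zpow_neg_natCast (u := fun n => v (-n)) hq₀ hq hneg).of_norm
  have hsub := summable_norm_sub_neg_mul_pow hq hpos hneg
  calc ∑' a : {a : ℤ // a ≠ 0}, v a / (1 - q ^ a.1)
      = ∑' n : ℕ+, (v n / (1 - q ^ (n : ℤ)) + v (-n) / (1 - q ^ (-n : ℤ))) := by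
        rw [hposSum.tsum_add hnegSum]
        exact (hasSum_int_ne_zero (f := fun a => v a / (1 - q ^ a))
          hposSum.hasSum hnegSum.hasSum).tsum_eq
    _ = ∑' n : ℕ+, (v n + (v n - v (-n)) * (q ^ (n : ℕ) / (1 - q ^ (n : ℕ)))) := by
        refine tsum_congr fun n => ?_
        rw [div_one_sub_zpow_natCast hq _ n.ne_zero, div_one_sub_zpow_neg_natCast hq₀]
        ring
    _ = (∑' n : ℕ+, v n) +
          ∑' n : ℕ+, q ^ (n : ℕ) * ∑ d ∈ (n : ℕ).divisors, (v d - v (-d)) := by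
        rw [hpos.of_norm.tsum_add (summable_norm_mul_pow_div_one_sub
          (u := fun d => v d - v (-d)) hq hsub).of_norm,
          tsum_mul_pow_div_one_sub_eq_tsum_sum_divisors (u := fun d => v d - v (-d)) hq hsub]

end Bilateral

section PowMulZpow

variable {𝕜 : Type*} [NormedField 𝕜] {p q : 𝕜}

lemma summable_norm_pow_mul_zpow (k : ℕ) (hp : ‖p‖ < 1) :
    Summable fun n : ℕ+ => ‖((n : ℤ) : 𝕜) ^ k * p ^ (n : ℤ)‖ := by
  simpa only [Int.cast_natCast, zpow_natCast] using!
    (summable_norm_pow_mul_geometric_of_norm_lt_one k hp).comp_injective PNat.coe_injective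

lemma summable_norm_neg_pow_mul_zpow_mul_pow (k : ℕ) (hqp : ‖q‖ < ‖p‖) :
    Summable fun n : ℕ+ => ‖((-n : ℤ) : 𝕜) ^ k * p ^ (-n : ℤ) * q ^ (n : ℕ)‖ := by
  have hqp' : ‖q / p‖ < 1 := by
    rw [norm_div]
    exact (div_lt_one ((norm_nonneg q).trans_lt hqp)).2 hqp
  refine (summable_norm_pow_mul_zpow k hqp').congr fun n => ?_
  simp only [Int.cast_neg, Int.cast_natCast, zpow_neg, zpow_natCast, norm_mul, norm_pow, norm_neg,
    norm_inv, norm_div]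
  ring

lemma pow_mul_zpow_sub_neg {k : ℕ} (hk : Odd k) (d : ℕ) :
    ((d : ℤ) : 𝕜) ^ k * p ^ (d : ℤ) - ((-d : ℤ) : 𝕜) ^ k * p ^ (-d : ℤ) =
      (d : 𝕜) ^ k * (p ^ (d : ℤ) + p ^ (-(d : ℤ))) := by
  rw [Int.cast_neg, hk.neg_pow, Int.cast_natCast]
  ring

theorem lattice_sum_q_expansion_higher_general [CompleteSpace 𝕜] {k : ℕ} (hk : Odd k)
    (hq : 0 < ‖q‖) (hqp : ‖q‖ < ‖p‖) (hp : ‖p‖ < 1) :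
    Summable (fun a : {a : ℤ // a ≠ 0} => ‖(a.1 : 𝕜) ^ k * p ^ a.1 / (1 - q ^ a.1)‖) ∧
    Summable (fun a : ℕ => ‖((a : 𝕜) + 1) ^ k * p ^ (a + 1)‖) ∧
    Summable (fun n : ℕ => ‖q ^ (n + 1) * ∑ d ∈ (n + 1).divisors,
      (d : 𝕜) ^ k * (p ^ (d : ℤ) + p ^ (-(d : ℤ)))‖) ∧
    ∑' a : {a : ℤ // a ≠ 0}, (a.1 : 𝕜) ^ k * p ^ a.1 / (1 - q ^ a.1) =
      (∑' a : ℕ, ((a : 𝕜) + 1) ^ k * p ^ (a + 1)) +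
        ∑' n : ℕ, q ^ (n + 1) * ∑ d ∈ (n + 1).divisors,
          (d : 𝕜) ^ k * (p ^ (d : ℤ) + p ^ (-(d : ℤ))) := by
  have hq₀ : q ≠ 0 := norm_pos_iff.1 hq
  have hq₁ : ‖q‖ < 1 := hqp.trans hp
  let v : ℤ → 𝕜 := fun a => (a : 𝕜) ^ k * p ^ a
  let f : ℕ → 𝕜 := fun n => (n : 𝕜) ^ k * p ^ n
  let w : ℕ → 𝕜 := fun n =>
    q ^ n * ∑ d ∈ n.divisors, (d : 𝕜) ^ k * (p ^ (d : ℤ) + p ^ (-(d : ℤ)))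
  have hf (n : ℕ) : v n = f n := by simp only [v, f, Int.cast_natCast, zpow_natCast]
  have hw (n : ℕ) : q ^ n * ∑ d ∈ n.divisors, (v d - v (-d)) = w n := by
    simp only [v, w, pow_mul_zpow_sub_neg hk]
  have hpos : Summable fun n : ℕ+ => ‖v n‖ := summable_norm_pow_mul_zpow k hp
  have hneg := summable_norm_neg_pow_mul_zpow_mul_pow k hqp
  have hleft := summable_norm_div_one_sub_zpow hq₀ hq₁ hpos hneg
  have hright := summable_norm_pow_mul_sum_divisors_sub_neg hq₁ hpos hneg
  have htsum := tsum_div_one_sub_zpow_eq_tsum_add_tsum_sum_divisors hq₀ hq₁ hpos hneg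
  simp only [hw] at hright htsum
  simp only [hf] at hpos htsum
  rw [tsum_pnat_eq_tsum_succ (f := f), tsum_pnat_eq_tsum_succ (f := w)] at htsum
  rw [summable_pnat_iff_summable_succ (f := fun n => ‖f n‖)] at hpos
  rw [summable_pnat_iff_summable_succ (f := fun n => ‖w n‖)] at hright
  simp only [f, Nat.cast_succ] at hpos htsum
  exact ⟨hleft, hpos, hright, htsum⟩

end PowMulZpow

/-- For an integer `g ≥ 1` and complex `p, q` with `0 < |q| < |p| < 1`, the family
`a ↦ a^{2g-1} p^a/(1 - q^a)` over nonzero integers `a` is absolutely summable, and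
`∑_{a ≠ 0} a^{2g-1} p^a/(1 - q^a)
  = ∑_{a ≥ 1} a^{2g-1} p^a + ∑_{n ≥ 1} q^n ∑_{d ∣ n} d^{2g-1} (p^d + p^{-d})`,
where both series on the right converge absolutely. -/
theorem lattice_sum_q_expansion_higher (g : ℕ) (hg : 1 ≤ g) (p q : ℂ)
    (hq : 0 < ‖q‖) (hqp : ‖q‖ < ‖p‖) (hp : ‖p‖ < 1) :
    Summable (fun a : {a : ℤ // a ≠ 0} =>
      ‖(a.1 : ℂ) ^ (2 * g - 1) * p ^ a.1 / (1 - q ^ a.1)‖) ∧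
    Summable (fun a : ℕ =>
      ‖((a : ℂ) + 1) ^ (2 * g - 1) * p ^ (a + 1)‖) ∧
    Summable (fun n : ℕ =>
      ‖q ^ (n + 1) * ∑ d ∈ (n + 1).divisors,
        (d : ℂ) ^ (2 * g - 1) * (p ^ (d : ℤ) + p ^ (-(d : ℤ)))‖) ∧
    ∑' a : {a : ℤ // a ≠ 0}, (a.1 : ℂ) ^ (2 * g - 1) * p ^ a.1 / (1 - q ^ a.1) =
      (∑' a : ℕ, ((a : ℂ) + 1) ^ (2 * g - 1) * p ^ (a + 1)) +
        ∑' n : ℕ, q ^ (n + 1) * ∑ d ∈ (n + 1).divisors,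
          (d : ℂ) ^ (2 * g - 1) * (p ^ (d : ℤ) + p ^ (-(d : ℤ))) :=
  lattice_sum_q_expansion_higher_general ⟨g - 1, by omega⟩ hq hqp hp
end

section
/- Let g \ge 1 be an integer and let q be a complex number with 0 < |q| < 1. Then the limit, as real p tends to 1 from below with |q| < p < 1, of ( \sum_{a \in \mathbb{Z}, a \ne 0} a^{2g-1} p^a / (1 - q^a) - \sum_{a \ge 1} a^{2g-1} p^a ) exists and equals 2 \sum_{n \ge 1} \sigma_{2g-1}(n) q^n, where \sigma_{2g-1}(n) = \sum_{d | n} d^{2g-1}. -/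
/-!
Write `L(x) = ∑_{n ≥ 1} n ^ k x ^ n / (1 - q ^ n)`. Since
`1 / (1 - q ^ a) = 1 + q ^ a / (1 - q ^ a)`, the terms with `a > 0` sum to
`∑_{a ≥ 1} a ^ k p ^ a + L(p q)`, and the substitution `a ↦ -a` turns those with `a < 0` into
`-(-1) ^ k L(q / p)`. So removing the principal part leaves `L(p q) - (-1) ^ k L(q / p)`. As `L` is
continuous on the whole open unit disc, this tends to `(1 - (-1) ^ k) L(q)` as `p → 1`, and
`L(q) = ∑ σ_k(n) q ^ n` is Lambert's identity.
-/

open Filter Topology Metric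

section Term

variable {𝕜 : Type*} [Field 𝕜]

/-- The term of index `a` of the two-sided Lambert series `∑ a ^ k x ^ a / (1 - q ^ a)`. The term
of index `0` has denominator `0`, hence is `0` in Lean. -/
def lambertTerm (k : ℕ) (q x : 𝕜) (a : ℤ) : 𝕜 :=
  (a : 𝕜) ^ k * x ^ a / (1 - q ^ a)

variable (k : ℕ) {q : 𝕜}

@[simp]
lemma lambertTerm_zero (q x : 𝕜) : lambertTerm k q x 0 = 0 := by
  simp [lambertTerm]

lemma lambertTerm_natCast_add_one (q x : 𝕜) (n : ℕ) :
    lambertTerm k q x (n + 1) = ((n : 𝕜) + 1) ^ k * x ^ (n + 1) / (1 - q ^ (n + 1)) := by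
  simp only [lambertTerm]
  norm_cast

lemma lambertTerm_eq_add (x : 𝕜) {a : ℤ} (ha : q ^ a ≠ 1) :
    lambertTerm k q x a = (a : 𝕜) ^ k * x ^ a + lambertTerm k q (x * q) a := by
  have hden : 1 - q ^ a ≠ 0 := sub_ne_zero.2 ha.symm
  simp only [lambertTerm, mul_zpow]
  field_simp
  ring

lemma lambertTerm_neg (hq : q ≠ 0) (x : 𝕜) (a : ℤ) :
    lambertTerm k q x (-a) = -(-1) ^ k * lambertTerm k q (q / x) a := by
  have hqa : q ^ a ≠ 0 := zpow_ne_zero a hq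
  have hden : 1 - (q ^ a)⁻¹ = -((1 - q ^ a) / q ^ a) := by
    field_simp
    ring
  simp only [lambertTerm, Int.cast_neg, zpow_neg, div_zpow, neg_pow (a : 𝕜), hden, div_neg,
    div_div_eq_mul_div]
  ring

end Term

section Series

variable {𝕜 : Type*} [NormedField 𝕜] (k : ℕ) {q x : 𝕜}

/-- The Lambert series `∑_{n ≥ 1} n ^ k x ^ n / (1 - q ^ n)`, with an argument `x` independent of
the base `q`. The index is shifted so as to run over `ℕ`. -/
noncomputable def lambertSeries (k : ℕ) (q x : 𝕜) : 𝕜 :=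
  ∑' n : ℕ, lambertTerm k q x (n + 1)

lemma one_sub_norm_le_norm_one_sub_pow (hq : ‖q‖ ≤ 1) {n : ℕ} (hn : n ≠ 0) :
    1 - ‖q‖ ≤ ‖1 - q ^ n‖ :=
  calc 1 - ‖q‖ ≤ 1 - ‖q‖ ^ n := sub_le_sub_left (pow_le_of_le_one (norm_nonneg q) hq hn) 1
    _ = ‖(1 : 𝕜)‖ - ‖q ^ n‖ := by rw [norm_one, norm_pow]
    _ ≤ ‖1 - q ^ n‖ := norm_sub_norm_le 1 (q ^ n)

lemma norm_lambertTerm_natCast_add_one_le (hq : ‖q‖ < 1) {r : ℝ} (hx : ‖x‖ ≤ r) (n : ℕ) :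
    ‖lambertTerm k q x (n + 1)‖ ≤ ((n + 1 : ℕ) : ℝ) ^ k * r ^ (n + 1) / (1 - ‖q‖) := by
  have hcast : ‖(n : 𝕜) + 1‖ ≤ ((n + 1 : ℕ) : ℝ) := by
    simpa using Nat.norm_cast_le (α := 𝕜) (n + 1)
  have hr0 : 0 ≤ r := (norm_nonneg x).trans hx
  have : 0 < 1 - ‖q‖ := sub_pos.2 hq
  have hden := one_sub_norm_le_norm_one_sub_pow hq.le n.succ_ne_zero
  rw [lambertTerm_natCast_add_one, norm_div, norm_mul, norm_pow, norm_pow]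
  gcongr

lemma summable_pow_mul_geometric_add_one [CompleteSpace 𝕜] (hx : ‖x‖ < 1) :
    Summable fun n : ℕ ↦ ((n + 1 : ℕ) : 𝕜) ^ k * x ^ (n + 1) :=
  (summable_nat_add_iff (f := fun n : ℕ ↦ (n : 𝕜) ^ k * x ^ n) 1).2
    (summable_pow_mul_geometric_of_norm_lt_one k hx)

lemma summable_lambertTerm_bound (q : 𝕜) {r : ℝ} (hr0 : 0 ≤ r) (hr1 : r < 1) :
    Summable fun n : ℕ ↦ ((n + 1 : ℕ) : ℝ) ^ k * r ^ (n + 1) / (1 - ‖q‖) :=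
  (summable_pow_mul_geometric_add_one k (by rwa [Real.norm_of_nonneg hr0])).div_const _

variable [CompleteSpace 𝕜]

lemma hasSum_lambertSeries (hq : ‖q‖ < 1) (hx : ‖x‖ < 1) :
    HasSum (fun n : ℕ ↦ lambertTerm k q x (n + 1)) (lambertSeries k q x) :=
  (Summable.of_norm_bounded (summable_lambertTerm_bound k q (norm_nonneg x) hx)
    (norm_lambertTerm_natCast_add_one_le k hq le_rfl)).hasSum

lemma continuousOn_lambertSeries_closedBall (hq : ‖q‖ < 1) {r : ℝ} (hr0 : 0 ≤ r) (hr1 : r < 1) :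
    ContinuousOn (lambertSeries k q) (closedBall 0 r) := by
  refine continuousOn_tsum (fun n ↦ ?_) (summable_lambertTerm_bound k q hr0 hr1)
    fun n x hx ↦ norm_lambertTerm_natCast_add_one_le k hq (mem_closedBall_zero_iff.1 hx) n
  simp only [lambertTerm_natCast_add_one]
  fun_prop

lemma continuousAt_lambertSeries (hq : ‖q‖ < 1) (hx : ‖x‖ < 1) :
    ContinuousAt (lambertSeries k q) x := by
  obtain ⟨r, hxr, hr1⟩ := exists_between hx
  exact (continuousOn_lambertSeries_closedBall k hq ((norm_nonneg x).trans hxr.le) hr1).continuousAt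
    (closedBall_mem_nhds_of_mem (mem_ball_zero_iff.2 hxr))

lemma hasSum_lambertTerm_pos (hq : ‖q‖ < 1) (hx : ‖x‖ < 1) :
    HasSum (fun n : ℕ ↦ lambertTerm k q x (n + 1))
      (∑' n : ℕ, ((n : 𝕜) + 1) ^ k * x ^ (n + 1) + lambertSeries k q (x * q)) := by
  have hxq : ‖x * q‖ < 1 := by
    rw [norm_mul]
    exact mul_lt_one_of_nonneg_of_lt_one_left (norm_nonneg x) hx hq.le
  have hden (n : ℕ) : q ^ ((n : ℤ) + 1) ≠ 1 := fun h ↦ by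
    have hlt : ‖q ^ (n + 1)‖ < 1 := by
      rw [norm_pow]
      exact pow_lt_one₀ (norm_nonneg q) hq n.succ_ne_zero
    norm_cast at h
    simp [h] at hlt
  convert (summable_pow_mul_geometric_add_one k hx).hasSum.add (hasSum_lambertSeries k hq hxq)
    using 2 with n
  · rw [lambertTerm_eq_add k x (hden n)]
    norm_cast
  · push_cast
    rfl

lemma hasSum_lambertTerm_neg (hq0 : q ≠ 0) (hq : ‖q‖ < 1) (hqx : ‖q / x‖ < 1) :
    HasSum (fun n : ℕ ↦ lambertTerm k q x (-(n + 1)))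
      (-(-1) ^ k * lambertSeries k q (q / x)) := by
  simpa only [lambertTerm_neg k hq0] using (hasSum_lambertSeries k hq hqx).mul_left (-(-1) ^ k)

lemma hasSum_lambertTerm_ne_zero (hq0 : q ≠ 0) (hq : ‖q‖ < 1) (hx : ‖x‖ < 1)
    (hqx : ‖q / x‖ < 1) :
    HasSum (fun a : {a : ℤ // a ≠ 0} ↦ lambertTerm k q x a)
      (∑' n : ℕ, ((n : 𝕜) + 1) ^ k * x ^ (n + 1) + lambertSeries k q (x * q) +
        -(-1) ^ k * lambertSeries k q (q / x)) := by
  have hsupp : Function.support (lambertTerm k q x) ⊆ {a | a ≠ 0} := by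
    rintro a ha rfl
    exact ha (lambertTerm_zero k q x)
  refine (hasSum_subtype_iff_of_support_subset hsupp).2 ?_
  simpa using
    (hasSum_lambertTerm_pos k hq hx).of_add_one_of_neg_add_one (hasSum_lambertTerm_neg k hq0 hq hqx)

lemma tendsto_lambertSeries_mul_add_div (hq : ‖q‖ < 1) (c : 𝕜) :
    Tendsto (fun x ↦ lambertSeries k q (x * q) + c * lambertSeries k q (q / x)) (𝓝 1)
      (𝓝 ((1 + c) * lambertSeries k q q)) := by
  have hmul : Tendsto (fun x : 𝕜 ↦ x * q) (𝓝 1) (𝓝 q) :=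
    (continuous_mul_const q).tendsto' 1 q (one_mul q)
  have hdiv : Tendsto (fun x : 𝕜 ↦ q / x) (𝓝 1) (𝓝 q) := by
    have hcont : ContinuousAt (fun x : 𝕜 ↦ q / x) 1 := by fun_prop (disch := exact one_ne_zero)
    simpa using hcont.tendsto
  have hL : Tendsto (lambertSeries k q) (𝓝 q) (𝓝 (lambertSeries k q q)) :=
    continuousAt_lambertSeries k hq hq
  rw [one_add_mul]
  exact (hL.comp hmul).add ((hL.comp hdiv).const_mul c)

end Series

lemma tendsto_ofReal_nhdsWithin_annulus {r R : ℝ} (hr : 0 ≤ r) (x : ℝ) :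
    Tendsto ((↑) : ℝ → ℂ) (𝓝[Set.Ioo r R] x) (𝓝[{z | r < ‖z‖ ∧ ‖z‖ < R}] x) :=
  Complex.continuous_ofReal.continuousWithinAt.tendsto_nhdsWithin fun p hp ↦ by
    simpa [abs_of_pos (hr.trans_lt hp.1)] using hp

section Regularization

variable {𝕜 : Type*} [NontriviallyNormedField 𝕜] [CompleteSpace 𝕜] [NormSMulClass ℤ 𝕜]

lemma lambertSeries_self (k : ℕ) {q : 𝕜} (hq : ‖q‖ < 1) :
    lambertSeries k q q =
      ∑' n : ℕ, (∑ d ∈ (n + 1).divisors, (d : 𝕜) ^ k) * q ^ (n + 1) := by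
  have h := tsum_pow_div_one_sub_eq_tsum_sigma hq k
  rw [tsum_pnat_eq_tsum_succ (f := fun n : ℕ ↦ (n : 𝕜) ^ k * q ^ n / (1 - q ^ n)),
    tsum_pnat_eq_tsum_succ (f := fun n : ℕ ↦ (ArithmeticFunction.sigma k n : 𝕜) * q ^ n)] at h
  simpa [lambertSeries, lambertTerm_natCast_add_one, ArithmeticFunction.sigma_apply] using h

theorem regularized_limit_eisenstein_general (k : ℕ) {q : 𝕜} (hq0 : q ≠ 0) (hq1 : ‖q‖ < 1) :
    Tendsto
      (fun p : 𝕜 ↦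
        (∑' a : {a : ℤ // a ≠ 0}, (a.1 : 𝕜) ^ k * p ^ a.1 / (1 - q ^ a.1)) -
          ∑' a : ℕ, ((a : 𝕜) + 1) ^ k * p ^ (a + 1))
      (𝓝[{p | ‖q‖ < ‖p‖ ∧ ‖p‖ < 1}] 1)
      (𝓝 ((1 - (-1) ^ k) *
        ∑' n : ℕ, (∑ d ∈ (n + 1).divisors, (d : 𝕜) ^ k) * q ^ (n + 1))) := by
  rw [← lambertSeries_self k hq1, sub_eq_add_neg 1]
  refine ((tendsto_lambertSeries_mul_add_div k hq1 _).mono_left nhdsWithin_le_nhds).congr' ?_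
  filter_upwards [self_mem_nhdsWithin] with p ⟨hqp, hp1⟩
  have hqp' : ‖q / p‖ < 1 := by
    rwa [norm_div, div_lt_one ((norm_nonneg q).trans_lt hqp)]
  have hsum := (hasSum_lambertTerm_ne_zero k hq0 hq1 hp1 hqp').tsum_eq
  simp only [lambertTerm] at hsum
  rw [hsum]
  ring

end Regularization

/-- For an integer `g ≥ 1` and complex `q` with `0 < |q| < 1`, the regularized
limit, as real `p → 1⁻` with `|q| < p < 1`, of
`∑_{a ≠ 0} a^{2g-1} p^a/(1 - q^a) - ∑_{a ≥ 1} a^{2g-1} p^a`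
exists and equals `2 ∑_{n ≥ 1} σ_{2g-1}(n) q^n`, where
`σ_{2g-1}(n) = ∑_{d ∣ n} d^{2g-1}`. -/
theorem regularized_limit_eisenstein (g : ℕ) (hg : 1 ≤ g) (q : ℂ)
    (hq0 : 0 < ‖q‖) (hq1 : ‖q‖ < 1) :
    Filter.Tendsto
      (fun p : ℝ =>
        (∑' a : {a : ℤ // a ≠ 0},
            (a.1 : ℂ) ^ (2 * g - 1) * (p : ℂ) ^ a.1 / (1 - q ^ a.1)) -
          ∑' a : ℕ, ((a : ℂ) + 1) ^ (2 * g - 1) * (p : ℂ) ^ (a + 1))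
      (nhdsWithin 1 (Set.Ioo ‖q‖ 1))
      (nhds (2 * ∑' n : ℕ,
        (∑ d ∈ (n + 1).divisors, (d : ℂ) ^ (2 * g - 1)) * q ^ (n + 1))) := by
  have hodd : Odd (2 * g - 1) := ⟨g - 1, by omega⟩
  simpa [hodd.neg_one_pow, one_add_one_eq_two, Function.comp_def] using
    (regularized_limit_eisenstein_general (2 * g - 1) (norm_pos_iff.1 hq0) hq1).comp
      (tendsto_ofReal_nhdsWithin_annulus hq0.le 1)
end
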